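/- For every integer n ≥ 3 and every real d > 0, the iterated integral ∫_{x=-∞}^{0} ∫_{y=d}^{∞} log(y−d) / (y−x)^n dy dx equals (log(d) − H(n−3)) / ((n−1)(n−2)·d^{n−2}). -/

import Mathlib

open Real MeasureTheory

/-- The `m`-th harmonic number `H(m) = ∑_{i=1}^{m} 1/i`, with `H(0) = 0`. -/
noncomputable def H (m : ℕ) : ℝ := ∑ i ∈ Finset.range m, (1 : ℝ) / (i + 1)

/-!
The integrand is absolutely integrable, so by Fubini the integral over `x` may be taken first; it
turns `(y - x)⁻ⁿ` into `y¹⁻ⁿ / (n - 1)` and leaves the single integrals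
`J m = ∫ y in (d, ∞), log (y - d) / y ^ (m + 2)`. Integrating the derivative of
`(y - d) * log (y - d) / y ^ (m + 2)`, which vanishes at both ends, yields
`(m + 2) * d * J (m + 1) = (m + 1) * J m - 1 / ((m + 1) * d ^ (m + 1))`. The reciprocals
`1 / (m + 1)` accumulate to the harmonic number, starting from `J 0 = log d / d`.
-/

open Filter Set Topology

lemma H_zero : H 0 = 0 := by simp [H]

lemma H_succ (m : ℕ) : H (m + 1) = H m + 1 / ((m : ℝ) + 1) := Finset.sum_range_succ _ m

section InversePowers

variable {c : ℝ}

lemma rpow_neg_natCast_add_two_eqOn_Ioi (hc : 0 < c) (m : ℕ) :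
    EqOn (fun t : ℝ ↦ t ^ (-((m : ℝ) + 2))) (fun t ↦ (t ^ (m + 2))⁻¹) (Ioi c) := fun t ht ↦ by
  simp only [← rpow_natCast, ← rpow_neg (hc.trans ht).le, Nat.cast_add, Nat.cast_ofNat]

lemma integrableOn_Ioi_inv_pow (hc : 0 < c) (m : ℕ) :
    IntegrableOn (fun t ↦ (t ^ (m + 2))⁻¹) (Ioi c) :=
  (integrableOn_Ioi_rpow_of_lt (by linarith [m.cast_nonneg (α := ℝ)]) hc).congr_fun
    (rpow_neg_natCast_add_two_eqOn_Ioi hc m) measurableSet_Ioi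

lemma integral_Ioi_inv_pow (hc : 0 < c) (m : ℕ) :
    ∫ t in Ioi c, (t ^ (m + 2))⁻¹ = ((m : ℝ) + 1)⁻¹ * (c ^ (m + 1))⁻¹ := by
  have exponent_eq : -((m : ℝ) + 2) + 1 = -((m + 1 : ℕ) : ℝ) := by push_cast; ring
  rw [← setIntegral_congr_fun measurableSet_Ioi (rpow_neg_natCast_add_two_eqOn_Ioi hc m),
    integral_Ioi_rpow_of_lt (by linarith [m.cast_nonneg (α := ℝ)]) hc, exponent_eq,
    rpow_neg hc.le, rpow_natCast, neg_div_neg_eq, div_eq_inv_mul]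
  push_cast
  rfl

variable {y : ℝ}

lemma integrableOn_Iio_inv_sub_pow (hy : c < y) (m : ℕ) :
    IntegrableOn (fun x ↦ ((y - x) ^ (m + 2))⁻¹) (Iio c) := by
  simpa [Function.comp_def] using
    ((Measure.measurePreserving_sub_left volume y).integrableOn_comp_preimage
      (measurableEmbedding_subLeft y)).2 (integrableOn_Ioi_inv_pow (sub_pos.2 hy) m)

lemma integral_Iio_inv_sub_pow (hy : c < y) (m : ℕ) :
    ∫ x in Iio c, ((y - x) ^ (m + 2))⁻¹ = ((m : ℝ) + 1)⁻¹ * ((y - c) ^ (m + 1))⁻¹ := by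
  rw [← integral_Ioi_inv_pow (sub_pos.2 hy), ←
    (Measure.measurePreserving_sub_left volume y).setIntegral_preimage_emb
      (measurableEmbedding_subLeft y)]
  simp

end InversePowers

section Fubini

variable {E : Type*} [NormedAddCommGroup E] [NormedSpace ℝ E] {μ : Measure ℝ} [SFinite μ]
  {f : ℝ → E} {c : ℝ} {m : ℕ}

lemma integrable_prod_inv_sub_pow_smul (hμ : ∀ᵐ y ∂μ, c < y)
    (hf : Integrable (fun y ↦ ((y - c) ^ (m + 1))⁻¹ • f y) μ) :
    Integrable (fun p : ℝ × ℝ ↦ ((p.2 - p.1) ^ (m + 2))⁻¹ • f p.2)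
      ((volume.restrict (Iio c)).prod μ) := by
  have hf_meas : AEStronglyMeasurable f μ := by
    have hpow : AEStronglyMeasurable (fun y ↦ (y - c) ^ (m + 1)) μ := by fun_prop
    refine (hpow.smul hf.aestronglyMeasurable).congr ?_
    filter_upwards [hμ] with y hy
    exact smul_inv_smul₀ (pow_ne_zero _ (sub_ne_zero.2 hy.ne')) _
  have hkernel_meas : Measurable fun p : ℝ × ℝ ↦ ((p.2 - p.1) ^ (m + 2))⁻¹ := by fun_prop
  refine (integrable_prod_iff' (hkernel_meas.aestronglyMeasurable.smul hf_meas.comp_snd)).2 ⟨?_, ?_⟩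
  · filter_upwards [hμ] with y hy
    exact (integrableOn_Iio_inv_sub_pow hy m).smul_const (f y)
  · refine (hf.norm.const_mul ((m : ℝ) + 1)⁻¹).congr ?_
    filter_upwards [hμ] with y hy
    have hnorm : ∀ x ∈ Iio c,
        ‖((y - x) ^ (m + 2))⁻¹ • f y‖ = ((y - x) ^ (m + 2))⁻¹ * ‖f y‖ := fun x hx ↦ by
      have : 0 < y - x := sub_pos.2 (hx.trans hy)
      rw [norm_smul, norm_of_nonneg (by positivity)]
    have : 0 < y - c := sub_pos.2 hy
    refine Eq.trans ?_ (setIntegral_congr_fun measurableSet_Iio hnorm).symm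
    rw [integral_mul_const, integral_Iio_inv_sub_pow hy, norm_smul,
      norm_of_nonneg (by positivity), mul_assoc]

lemma integral_Iio_integral_inv_sub_pow_smul [CompleteSpace E] (hμ : ∀ᵐ y ∂μ, c < y)
    (hf : Integrable (fun y ↦ ((y - c) ^ (m + 1))⁻¹ • f y) μ) :
    ∫ x in Iio c, ∫ y, ((y - x) ^ (m + 2))⁻¹ • f y ∂μ =
      ((m : ℝ) + 1)⁻¹ • ∫ y, ((y - c) ^ (m + 1))⁻¹ • f y ∂μ := by
  rw [integral_integral_swap (integrable_prod_inv_sub_pow_smul hμ hf), ← integral_smul]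
  refine integral_congr_ae ?_
  filter_upwards [hμ] with y hy
  rw [integral_smul_const, integral_Iio_inv_sub_pow hy, mul_smul]

end Fubini

section LogIntegral

lemma tendsto_log_sub_div_atTop (d : ℝ) : Tendsto (fun t ↦ log (t - d) / t) atTop (𝓝 0) := by
  simpa [Function.comp_def, ← sub_eq_add_neg] using
    (tendsto_pow_log_div_mul_add_atTop 1 d 1 one_ne_zero).comp
      (tendsto_atTop_add_const_right _ (-d) tendsto_id)

lemma tendsto_sub_mul_log_sub_div_sub_log_atTop (d : ℝ) :
    Tendsto (fun t ↦ (t - d) * log (t - d) / t - log t) atTop (𝓝 0) := by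
  have h := (tendsto_log_comp_add_sub_log (-d)).sub ((tendsto_log_sub_div_atTop d).const_mul d)
  rw [mul_zero, sub_zero] at h
  refine h.congr' ?_
  filter_upwards [eventually_ne_atTop 0] with t ht
  rw [← sub_eq_add_neg]
  field_simp
  ring

lemma tendsto_sub_mul_log_sub_div_pow_atTop (d : ℝ) (m : ℕ) :
    Tendsto (fun t ↦ (t - d) * log (t - d) / t ^ (m + 2)) atTop (𝓝 0) := by
  have hinv : Tendsto (fun t : ℝ ↦ t⁻¹) atTop (𝓝 0) := tendsto_inv_atTop_zero
  have h := (((hinv.const_mul d).const_sub 1).mul (tendsto_log_sub_div_atTop d)).mul (hinv.pow m)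
  rw [mul_zero, zero_mul] at h
  refine h.congr' ?_
  filter_upwards [eventually_ne_atTop 0] with t ht
  rw [inv_pow]
  field_simp
  ring

variable {d : ℝ}

lemma hasDerivAt_sub_mul_log_sub_div_pow {t : ℝ} (ht : t ≠ 0) (htd : t ≠ d) (m : ℕ) :
    HasDerivAt (fun t ↦ (t - d) * log (t - d) / t ^ (m + 1))
      ((m + 1) * d * (log (t - d) / t ^ (m + 2)) - m * (log (t - d) / t ^ (m + 1))
        + (t ^ (m + 1))⁻¹) t := by
  have hnum := (hasDerivAt_mul_log (sub_ne_zero.2 htd)).comp_sub_const t d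
  refine (hnum.div (hasDerivAt_pow (m + 1) t) (pow_ne_zero _ ht)).congr_deriv ?_
  push_cast
  field_simp
  ring

lemma hasDerivAt_sub_mul_log_sub_div_sub_log {t : ℝ} (ht : t ≠ 0) (htd : t ≠ d) :
    HasDerivAt (fun t ↦ (t - d) * log (t - d) / t - log t) (d * (log (t - d) / t ^ 2)) t := by
  simpa using! (hasDerivAt_sub_mul_log_sub_div_pow ht htd 0).sub (hasDerivAt_log ht)

lemma continuousAt_sub_mul_log_sub_div_pow (hd : d ≠ 0) (m : ℕ) :
    ContinuousAt (fun t ↦ (t - d) * log (t - d) / t ^ m) d :=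
  (continuous_mul_log.comp (continuous_sub_right d)).continuousAt.div
    (continuous_pow m).continuousAt (pow_ne_zero m hd)

lemma integrableOn_Ioi_log_sub_div_sq (hd : 0 < d) :
    IntegrableOn (fun t ↦ log (t - d) / t ^ 2) (Ioi d) := by
  have near : IntegrableOn (fun t ↦ log (t - d) / t ^ 2) (Ioc d (d + 1)) := by
    rw [← intervalIntegrable_iff_integrableOn_Ioc_of_le (by linarith)]
    have hlog : IntervalIntegrable (fun t ↦ log (t - d)) volume d (d + 1) := by
      simpa [add_comm] using
        (intervalIntegral.intervalIntegrable_log' (a := 0) (b := 1)).comp_sub_right d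
    simp only [div_eq_mul_inv]
    refine hlog.mul_continuousOn ((continuousOn_pow 2).inv₀ fun t ht ↦ ?_)
    rw [uIcc_of_le (by linarith)] at ht
    exact pow_ne_zero 2 (hd.trans_le ht.1).ne'
  have far : IntegrableOn (fun t ↦ log (t - d) / t ^ 2) (Ioi (d + 1)) := by
    suffices IntegrableOn (fun t ↦ d * (log (t - d) / t ^ 2)) (Ioi (d + 1)) from
      (integrable_const_mul_iff (isUnit_iff_ne_zero.2 hd.ne') _).1 this
    refine integrableOn_Ioi_deriv_of_nonneg' (fun t ht ↦ ?_) (fun t ht ↦ ?_)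
      (tendsto_sub_mul_log_sub_div_sub_log_atTop d)
    · have : d + 1 ≤ t := ht
      exact hasDerivAt_sub_mul_log_sub_div_sub_log (by linarith) (by linarith)
    · have : d + 1 < t := ht
      have := log_nonneg (show 1 ≤ t - d by linarith)
      positivity
  rw [← Ioc_union_Ioi_eq_Ioi (show d ≤ d + 1 by linarith)]
  exact near.union far

lemma integrableOn_Ioi_log_sub_div_pow (hd : 0 < d) (m : ℕ) :
    IntegrableOn (fun t ↦ log (t - d) / t ^ (m + 2)) (Ioi d) := by
  have hbound : ∀ᵐ t ∂volume.restrict (Ioi d), ‖(t ^ m)⁻¹‖ ≤ (d ^ m)⁻¹ := by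
    filter_upwards [ae_restrict_mem measurableSet_Ioi] with t ht
    have hdt : d < t := ht
    have : 0 < t := hd.trans hdt
    rw [norm_of_nonneg (by positivity)]
    gcongr
  refine ((integrableOn_Ioi_log_sub_div_sq hd).mul_bdd (by fun_prop) hbound).congr ?_
  exact .of_forall fun t ↦ by simp only [pow_add, div_eq_mul_inv, mul_inv]; ring

lemma integral_Ioi_log_sub_div_sq (hd : 0 < d) :
    ∫ t in Ioi d, log (t - d) / t ^ 2 = log d / d := by
  have hcont : ContinuousAt (fun t ↦ (t - d) * log (t - d) / t - log t) d := by
    simpa using! (continuousAt_sub_mul_log_sub_div_pow hd.ne' 1).sub (continuousAt_log hd.ne')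
  have h := integral_Ioi_of_hasDerivAt_of_tendsto hcont.continuousWithinAt
    (fun t ht ↦ hasDerivAt_sub_mul_log_sub_div_sub_log (hd.trans ht).ne' (ne_of_gt ht))
    ((integrableOn_Ioi_log_sub_div_sq hd).const_mul d)
    (tendsto_sub_mul_log_sub_div_sub_log_atTop d)
  rw [integral_const_mul] at h
  rw [eq_div_iff hd.ne', mul_comm, h]
  simp

lemma integral_Ioi_log_sub_div_pow_succ (hd : 0 < d) (m : ℕ) :
    (m + 2) * d * ∫ t in Ioi d, log (t - d) / t ^ (m + 3) =
      (m + 1) * (∫ t in Ioi d, log (t - d) / t ^ (m + 2))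
        - ((m : ℝ) + 1)⁻¹ * (d ^ (m + 1))⁻¹ := by
  have hcurr := (integrableOn_Ioi_log_sub_div_pow hd m).const_mul ((m + 1 : ℕ) : ℝ)
  have hnext := (integrableOn_Ioi_log_sub_div_pow hd (m + 1)).const_mul (((m + 1 : ℕ) + 1 : ℝ) * d)
  have hpow := integrableOn_Ioi_inv_pow hd m
  have h := integral_Ioi_of_hasDerivAt_of_tendsto
    (continuousAt_sub_mul_log_sub_div_pow hd.ne' (m + 2)).continuousWithinAt
    (fun t ht ↦ hasDerivAt_sub_mul_log_sub_div_pow (hd.trans ht).ne' (ne_of_gt ht) (m + 1))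
    ((hnext.sub' hcurr).add hpow) (tendsto_sub_mul_log_sub_div_pow_atTop d m)
  rw [integral_add (hnext.sub' hcurr) hpow, integral_sub hnext hcurr, integral_const_mul,
    integral_const_mul, integral_Ioi_inv_pow hd] at h
  simp only [sub_self, zero_mul, zero_div] at h
  push_cast at h
  linear_combination h

theorem integral_Ioi_log_sub_div_pow (hd : 0 < d) (m : ℕ) :
    ∫ t in Ioi d, log (t - d) / t ^ (m + 2) = (log d - H m) / ((m + 1) * d ^ (m + 1)) := by
  induction m with
  | zero => simpa [H_zero] using integral_Ioi_log_sub_div_sq hd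
  | succ m ih =>
    have hrec := integral_Ioi_log_sub_div_pow_succ hd m
    have hcoeff : ((m : ℝ) + 2) * d ≠ 0 := by positivity
    rw [ih] at hrec
    apply mul_left_cancel₀ hcoeff
    rw [hrec, H_succ]
    push_cast
    field_simp
    ring

end LogIntegral

/-- For every integer `n ≥ 3` and real `d > 0`,
`∫_{x=-∞}^{0} ∫_{y=d}^{∞} log(y−d) / (y−x)^n dy dx
  = (log d − H(n−3)) / ((n−1)(n−2)·d^{n−2})`. -/
theorem iterated_integral_log_y_sub_d (n : ℕ) (hn : 3 ≤ n) (d : ℝ) (hd : 0 < d) :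
    (∫ x in Set.Iio (0 : ℝ), ∫ y in Set.Ioi d, Real.log (y - d) / (y - x) ^ n) =
      (Real.log d - H (n - 3)) / (((n : ℝ) - 1) * ((n : ℝ) - 2) * d ^ (n - 2)) := by
  obtain ⟨m, rfl⟩ := Nat.exists_eq_add_of_le' hn
  have hpos : ∀ᵐ y ∂volume.restrict (Ioi d), 0 < y :=
    (ae_restrict_mem measurableSet_Ioi).mono fun y hy ↦ hd.trans hy
  have hfubini : ∫ x in Iio 0, ∫ y in Ioi d, log (y - d) / (y - x) ^ (m + 3) =
      ((m : ℝ) + 2)⁻¹ * ∫ y in Ioi d, log (y - d) / y ^ (m + 2) := by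
    have h := integral_Iio_integral_inv_sub_pow_smul (m := m + 1) (f := fun y ↦ log (y - d)) hpos
      (by simpa [inv_mul_eq_div, IntegrableOn] using integrableOn_Ioi_log_sub_div_pow hd m)
    simpa [inv_mul_eq_div, add_assoc, one_add_one_eq_two] using h
  rw [hfubini, integral_Ioi_log_sub_div_pow hd, Nat.add_sub_cancel,
    show m + 3 - 2 = m + 1 by lia]
  push_cast
  rw [show (m : ℝ) + 3 - 1 = m + 2 by ring, show (m : ℝ) + 3 - 2 = m + 1 by ring]
  field_simp
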